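/- A function f : [0,1] → ℝ has a continuous modulus if and only if f is induced by a code of a continuous function. -/

import Mathlib

open Filter

/-- A regular sequence of rationals: `|r n - r (n+1)| ≤ 2^(-(n+1))`. -/
def Regular (r : ℕ → ℚ) : Prop := ∀ n : ℕ, |r n - r (n + 1)| ≤ 1 / 2 ^ (n + 1)

/-- The real number determined by a (regular, hence Cauchy) sequence of rationals. -/
noncomputable def rlim (r : ℕ → ℚ) : ℝ := limUnder atTop fun n => (r n : ℝ)

/-- `x` is a regular sequence representing a real number in the unit interval. -/
noncomputable def InUnit (x : ℕ → ℚ) : Prop := Regular x ∧ rlim x ∈ Set.Icc (0 : ℝ) 1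

/-- `triN s` : numbering of the nodes of the ternary tree:
`N(⟨⟩) = 1`, `N(s * ⟨i⟩) = 2 * N(s) + i - 1`. -/
def triN (s : List (Fin 3)) : ℕ := s.foldl (fun a i => 2 * a + i.val - 1) 1

/-- Initial segment of length `n` of `α`. -/
def seg3 (α : ℕ → Fin 3) (n : ℕ) : List (Fin 3) := List.ofFn fun i : Fin n => α i

/-- `Phi α` is the limit of the Cauchy sequence `x_α^n = 2^(-(n+1)) * N(ᾱ n)`. -/
noncomputable def Phi (α : ℕ → Fin 3) : ℝ :=
  limUnder atTop fun n => (triN (seg3 α n) : ℝ) / 2 ^ (n + 1)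

/-- `f : [0,1] → ℝ` has a continuous modulus: a family `g k` of pointwise continuous
functions on the underlying set of regular sequences in `[0,1]` such that
`|x - y| ≤ 2^(-(g k x))` implies `|f x - f y| ≤ 2^(-k)`. -/
def HasContModulus (f : ℝ → ℝ) : Prop :=
  ∃ g : ℕ → (ℕ → ℚ) → ℕ,
    (∀ (k : ℕ) (x y : ℕ → ℚ), InUnit x → InUnit y →
      |rlim x - rlim y| ≤ 1 / 2 ^ g k x → |f (rlim x) - f (rlim y)| ≤ 1 / 2 ^ k) ∧
    (∀ (k : ℕ) (x : ℕ → ℚ), InUnit x → ∃ n : ℕ, ∀ y : ℕ → ℚ, InUnit y →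
      (∀ i < n, x i = y i) → g k x = g k y)

/-- `f : [0,1] → ℝ` has a continuous ternary modulus: a family `g k` of pointwise
continuous functions on `{0,1,2}^ℕ` such that `|Φ α - x| ≤ 2^(-(g k α))` implies
`|f (Φ α) - f x| ≤ 2^(-k)`. -/
def HasContTernModulus (f : ℝ → ℝ) : Prop :=
  ∃ g : ℕ → (ℕ → Fin 3) → ℕ,
    (∀ (k : ℕ) (α : ℕ → Fin 3), ∀ x ∈ Set.Icc (0 : ℝ) 1,
      |Phi α - x| ≤ 1 / 2 ^ g k α → |f (Phi α) - f x| ≤ 1 / 2 ^ k) ∧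
    (∀ (k : ℕ) (α : ℕ → Fin 3), ∃ n : ℕ, ∀ β : ℕ → Fin 3,
      seg3 α n = seg3 β n → g k α = g k β)

/-- `f : [0,1] → ℝ` is uniformly continuous on the unit interval, with a modulus `ω`. -/
def UnifContOn (f : ℝ → ℝ) : Prop :=
  ∃ ω : ℕ → ℕ, ∀ k : ℕ, ∀ x ∈ Set.Icc (0 : ℝ) 1, ∀ y ∈ Set.Icc (0 : ℝ) 1,
    |x - y| ≤ 1 / 2 ^ ω k → |f x - f y| ≤ 1 / 2 ^ k

/-- The rational interval `I_s = [2^(-(|s|+1))·(N s - 1), 2^(-(|s|+1))·(N s + 1)]`. -/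
def Iseg (s : List (Fin 3)) : ℚ × ℚ :=
  (((triN s : ℚ) - 1) / 2 ^ (s.length + 1), ((triN s : ℚ) + 1) / 2 ^ (s.length + 1))

/-- `I ≈ J`: the rational intervals `I` and `J` overlap. -/
def approxI (I J : ℚ × ℚ) : Prop := J.1 ≤ I.2 ∧ I.1 ≤ J.2

/-- A code of a continuous function (Loeb). -/
def IsCode (φ : List (Fin 3) → Option (ℚ × ℚ)) : Prop :=
  (∀ (s : List (Fin 3)) (p q : ℚ), φ s = some (p, q) → p ≤ q) ∧
  (∀ (k : ℕ) (α : ℕ → Fin 3), ∃ (n : ℕ) (p q : ℚ),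
    φ (seg3 α n) = some (p, q) ∧ q - p ≤ 1 / 2 ^ k) ∧
  (∀ (s : List (Fin 3)) (I : ℚ × ℚ), φ s = some I → ∀ i : Fin 3,
    ∃ J : ℚ × ℚ, φ (s ++ [i]) = some J ∧ I.1 ≤ J.1 ∧ J.2 ≤ I.2) ∧
  (∀ (s t : List (Fin 3)) (I J : ℚ × ℚ), φ s = some I → φ t = some J →
    approxI (Iseg s) (Iseg t) → approxI I J)

/-- At stage `n`, the code `φ` produces along `α` an interval of length `≤ 2^(-k)`. -/
def goodAt (φ : List (Fin 3) → Option (ℚ × ℚ)) (α : ℕ → Fin 3) (k n : ℕ) : Prop :=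
  ∃ p q : ℚ, φ (seg3 α n) = some (p, q) ∧ q - p ≤ 1 / 2 ^ k

open Classical in
/-- `hIdx φ α k` is the least `n` such that `φ (ᾱ n)` is an interval of length
`≤ 2^(-k)` (and `0` if there is none). -/
noncomputable def hIdx (φ : List (Fin 3) → Option (ℚ × ℚ)) (α : ℕ → Fin 3) (k : ℕ) : ℕ :=
  if h : ∃ n, goodAt φ α k n then Nat.find h else 0

/-- Left endpoint of an optional rational interval. -/
def leftOf (o : Option (ℚ × ℚ)) : ℚ := (o.getD (0, 0)).1

/-- `f` is induced by the code `φ`: for every `α`, `f (Φ α)` is the limit of the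
left endpoints of the intervals `φ (ᾱ (h_n α))`. -/
def InducedBy (f : ℝ → ℝ) (φ : List (Fin 3) → Option (ℚ × ℚ)) : Prop :=
  ∀ α : ℕ → Fin 3,
    Tendsto (fun n => (leftOf (φ (seg3 α (hIdx φ α n))) : ℝ)) atTop (nhds (f (Phi α)))

lemma seg3_succ (α : ℕ → Fin 3) (n : ℕ) : seg3 α (n + 1) = seg3 α n ++ [α n] := by
  unfold seg3
  rw [List.ofFn_succ_last]
  simp

lemma seg3_length (α : ℕ → Fin 3) (n : ℕ) : (seg3 α n).length = n := by
  simp [seg3]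

lemma seg3_congr {α β : ℕ → Fin 3} {n : ℕ} (h : ∀ i < n, α i = β i) : seg3 α n = seg3 β n := by
  unfold seg3
  congr 1
  funext i
  exact h i i.2

lemma triN_append (s : List (Fin 3)) (i : Fin 3) :
    triN (s ++ [i]) = 2 * triN s + i.val - 1 := by
  simp [triN, List.foldl_append]

lemma triN_pos (s : List (Fin 3)) : 1 ≤ triN s := by
  induction s using List.reverseRecOn with
  | nil => simp [triN]
  | append_singleton s i ih => rw [triN_append]; omega

lemma triN_append_real (s : List (Fin 3)) (i : Fin 3) :
    (triN (s ++ [i]) : ℝ) = 2 * triN s + (i.val : ℝ) - 1 := by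
  have h := triN_pos s
  rw [triN_append, Nat.cast_sub (by omega)]
  push_cast
  ring

lemma triN_lt (s : List (Fin 3)) : triN s + 1 ≤ 2 ^ (s.length + 1) := by
  induction s using List.reverseRecOn with
  | nil => simp [triN]
  | append_singleton s i ih =>
    rw [triN_append, List.length_append, List.length_singleton, pow_succ]
    have := triN_pos s
    have := i.2
    omega

/-- real version of the interval -/
def IR (s : List (Fin 3)) : Set ℝ := Set.Icc ((Iseg s).1 : ℝ) ((Iseg s).2 : ℝ)

lemma Iseg1 (s : List (Fin 3)) : ((Iseg s).1 : ℝ) = ((triN s : ℝ) - 1) / 2 ^ (s.length + 1) := by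
  simp [Iseg]

lemma Iseg2 (s : List (Fin 3)) : ((Iseg s).2 : ℝ) = ((triN s : ℝ) + 1) / 2 ^ (s.length + 1) := by
  simp [Iseg]

lemma IR_unit (s : List (Fin 3)) : IR s ⊆ Set.Icc 0 1 := by
  have h1 : (1 : ℝ) ≤ triN s := by exact_mod_cast triN_pos s
  have h2 : (triN s : ℝ) + 1 ≤ 2 ^ (s.length + 1) := by exact_mod_cast triN_lt s
  unfold IR
  rw [Iseg1, Iseg2]
  apply Set.Icc_subset_Icc
  · apply div_nonneg <;> [linarith; positivity]
  · rw [div_le_one (by positivity)]; exact h2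

lemma Iseg_le (s : List (Fin 3)) : ((Iseg s).1 : ℝ) ≤ ((Iseg s).2 : ℝ) := by
  rw [Iseg1, Iseg2]
  gcongr
  linarith

lemma IR_width (s : List (Fin 3)) {x y : ℝ} (hx : x ∈ IR s) (hy : y ∈ IR s) :
    |x - y| ≤ 1 / 2 ^ s.length := by
  unfold IR at hx hy
  rw [Iseg1, Iseg2] at hx hy
  have e : ((triN s : ℝ) + 1) / 2 ^ (s.length + 1) - ((triN s : ℝ) - 1) / 2 ^ (s.length + 1)
      = 1 / 2 ^ s.length := by
    rw [pow_succ]; field_simp; ring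
  rw [abs_le]
  constructor <;> linarith [hx.1, hx.2, hy.1, hy.2]

lemma IR_nested (s : List (Fin 3)) (i : Fin 3) : IR (s ++ [i]) ⊆ IR s := by
  unfold IR
  rw [Iseg1, Iseg2, Iseg1, Iseg2, triN_append_real, List.length_append, List.length_singleton]
  have hi : (i.val : ℝ) ≤ 2 := by exact_mod_cast (by omega : i.val ≤ 2)
  have hi0 : (0 : ℝ) ≤ i.val := by positivity
  apply Set.Icc_subset_Icc
  · rw [div_le_div_iff₀ (by positivity) (by positivity), pow_succ _ (s.length + 1)]
    have : (0 : ℝ) < 2 ^ (s.length + 1) := by positivity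
    nlinarith
  · rw [div_le_div_iff₀ (by positivity) (by positivity), pow_succ _ (s.length + 1)]
    have : (0 : ℝ) < 2 ^ (s.length + 1) := by positivity
    nlinarith

lemma seq_step (α : ℕ → Fin 3) (n : ℕ) :
    dist ((triN (seg3 α n) : ℝ) / 2 ^ (n + 1)) ((triN (seg3 α (n + 1)) : ℝ) / 2 ^ (n + 1 + 1))
      ≤ (1 / 2 : ℝ) / 2 / 2 ^ n := by
  rw [seg3_succ, triN_append_real, Real.dist_eq]
  have hi : ((α n).val : ℝ) ≤ 2 := by exact_mod_cast (by omega : (α n).val ≤ 2)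
  have hi0 : (0 : ℝ) ≤ (α n).val := by positivity
  have e : (triN (seg3 α n) : ℝ) / 2 ^ (n + 1)
      - (2 * (triN (seg3 α n) : ℝ) + ((α n).val : ℝ) - 1) / 2 ^ (n + 1 + 1)
      = (1 - ((α n).val : ℝ)) * ((1 / 2 : ℝ) / 2 / 2 ^ n) := by
    rw [pow_succ, pow_succ]; field_simp; ring
  rw [e, abs_mul, abs_of_pos (a := (1 / 2 : ℝ) / 2 / 2 ^ n) (by positivity)]
  apply mul_le_of_le_one_left (by positivity)
  rw [abs_le]; constructor <;> linarith

lemma Phi_tendsto (α : ℕ → Fin 3) :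
    Tendsto (fun n => (triN (seg3 α n) : ℝ) / 2 ^ (n + 1)) atTop (nhds (Phi α)) :=
  (cauchySeq_tendsto_of_complete (cauchySeq_of_le_geometric_two (seq_step α))).elim
    fun _ h => tendsto_nhds_limUnder ⟨_, h⟩

lemma Phi_mem (α : ℕ → Fin 3) (n : ℕ) : Phi α ∈ IR (seg3 α n) := by
  have h := dist_le_of_le_geometric_two_of_tendsto (seq_step α) (Phi_tendsto α) n
  rw [Real.dist_eq, abs_le] at h
  have e : (1 / 2 : ℝ) / 2 ^ n = 1 / 2 ^ (n + 1) := by rw [pow_succ]; field_simp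
  rw [e] at h
  unfold IR
  rw [Iseg1, Iseg2, seg3_length, sub_div, add_div]
  constructor <;> linarith [h.1, h.2]

lemma Phi_unit (α : ℕ → Fin 3) : Phi α ∈ Set.Icc (0 : ℝ) 1 := IR_unit _ (Phi_mem α 0)

lemma eq_Phi {α : ℕ → Fin 3} {x : ℝ} (h : ∀ n, x ∈ IR (seg3 α n)) : x = Phi α := by
  have h0 : Tendsto (fun n : ℕ => (1 / 2 : ℝ) ^ n) atTop (nhds 0) :=
    tendsto_pow_atTop_nhds_zero_of_lt_one (by norm_num) (by norm_num)
  have : |x - Phi α| ≤ 0 := by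
    apply ge_of_tendsto' h0
    intro n
    have := IR_width _ (h n) (Phi_mem α n)
    rw [seg3_length] at this
    rwa [one_div_pow]
  have := abs_nonpos_iff.1 this
  linarith

lemma Phi_dist {α β : ℕ → Fin 3} {n : ℕ} (h : ∀ i < n, α i = β i) :
    |Phi α - Phi β| ≤ 1 / 2 ^ n := by
  have h2 := Phi_mem β n
  rw [← seg3_congr h] at h2
  have := IR_width _ (Phi_mem α n) h2
  rwa [seg3_length] at this

open Classical in
/-- node sequence used for surjectivity -/
noncomputable def nodeSeq (x : ℝ) : ℕ → List (Fin 3)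
  | 0 => []
  | n + 1 => nodeSeq x n ++ [if x ≤ (triN (nodeSeq x n) : ℝ) / 2 ^ (n + 1) then 0 else 2]

lemma Phi_surj {x : ℝ} (hx : x ∈ Set.Icc (0 : ℝ) 1) : ∃ α, Phi α = x := by
  classical
  let α : ℕ → Fin 3 := fun n => if x ≤ (triN (nodeSeq x n) : ℝ) / 2 ^ (n + 1) then 0 else 2
  have hseg : ∀ n, seg3 α n = nodeSeq x n := by
    intro n
    induction n with
    | zero => simp [seg3, nodeSeq]
    | succ n ih => rw [seg3_succ, ih, nodeSeq]
  refine ⟨α, (eq_Phi ?_).symm⟩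
  intro n
  induction n with
  | zero => simpa [IR, Iseg, seg3, triN] using hx
  | succ n ih =>
    unfold IR at ih ⊢
    rw [Iseg1, Iseg2, seg3_length] at ih ⊢
    rw [seg3_succ, triN_append_real]
    have e : ∀ z : ℝ, z / 2 ^ (n + 1 + 1) = (z / 2) / 2 ^ (n + 1) := by
      intro z; rw [pow_succ _ (n + 1)]; field_simp
    rw [e, e]
    by_cases hc : x ≤ (triN (nodeSeq x n) : ℝ) / 2 ^ (n + 1)
    · have : α n = 0 := if_pos hc
      rw [this]
      rw [← hseg] at hc
      constructor
      · convert ih.1 using 2; simp; ring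
      · refine hc.trans (le_of_eq ?_); congr 1; simp
    · have : α n = 2 := if_neg hc
      rw [this]
      rw [← hseg] at hc
      constructor
      · convert (not_le.1 hc).le using 2; simp; ring
      · convert ih.2 using 2; simp; ring

lemma cylinder_nhds (α : ℕ → Fin 3) (n : ℕ) : ∀ᶠ β in nhds α, ∀ i < n, α i = β i := by
  have : ∀ i ∈ {i : ℕ | i < n}, ∀ᶠ β in nhds α, α i = β i := by
    intro i _
    have h := (continuous_apply (A := fun _ : ℕ => Fin 3) i).continuousAt (x := α)
    have := h.eventually (p := fun b => α i = b) (by rw [nhds_discrete]; exact Filter.eventually_pure.2 rfl)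
    exact this
  exact (Filter.eventually_all_finite (Set.finite_lt_nat n)).2 this

lemma half_pow_lt_ex {ε : ℝ} (hε : 0 < ε) : ∃ n : ℕ, (1 : ℝ) / 2 ^ n < ε := by
  obtain ⟨n, hn⟩ := exists_pow_lt_of_lt_one hε (by norm_num : (1 / 2 : ℝ) < 1)
  exact ⟨n, by rwa [one_div_pow] at hn⟩

lemma cont_of_cyl (F : (ℕ → Fin 3) → ℝ)
    (h : ∀ α k, ∃ n, ∀ β : ℕ → Fin 3, (∀ i < n, α i = β i) → |F β - F α| ≤ 1 / 2 ^ k) :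
    Continuous F := by
  rw [continuous_iff_continuousAt]
  intro α
  rw [ContinuousAt, Metric.tendsto_nhds]
  intro ε hε
  obtain ⟨k, hk⟩ := half_pow_lt_ex hε
  obtain ⟨n, hn⟩ := h α k
  filter_upwards [cylinder_nhds α n] with β hβ
  rw [Real.dist_eq]
  exact (hn β hβ).trans_lt hk

lemma Phi_cont : Continuous Phi := by
  apply cont_of_cyl
  intro α k
  refine ⟨k, fun β h => ?_⟩
  rw [abs_sub_comm]
  exact Phi_dist h

lemma code_mono {φ : List (Fin 3) → Option (ℚ × ℚ)} (hφ : IsCode φ) (α : ℕ → Fin 3) {n : ℕ}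
    {I : ℚ × ℚ} (h : φ (seg3 α n) = some I) {m : ℕ} (hm : n ≤ m) :
    ∃ J, φ (seg3 α m) = some J ∧ I.1 ≤ J.1 ∧ J.2 ≤ I.2 := by
  induction m, hm using Nat.le_induction with
  | base => exact ⟨I, h, le_rfl, le_rfl⟩
  | succ m hm ih =>
    obtain ⟨J, hJ, h1, h2⟩ := ih
    obtain ⟨K, hK, h3, h4⟩ := hφ.2.2.1 _ J hJ (α m)
    exact ⟨K, by rw [seg3_succ]; exact hK, h1.trans h3, h4.trans h2⟩

lemma hIdx_good {φ : List (Fin 3) → Option (ℚ × ℚ)} (hφ : IsCode φ) (α : ℕ → Fin 3) (k : ℕ) :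
    goodAt φ α k (hIdx φ α k) := by
  classical
  have h : ∃ n, goodAt φ α k n := hφ.2.1 k α
  unfold hIdx
  rw [dif_pos h]
  exact Nat.find_spec h

lemma half_tendsto : Tendsto (fun n : ℕ => (1 : ℝ) / 2 ^ n) atTop (nhds 0) := by
  have h0 : Tendsto (fun n : ℕ => (1 / 2 : ℝ) ^ n) atTop (nhds 0) :=
    tendsto_pow_atTop_nhds_zero_of_lt_one (by norm_num) (by norm_num)
  simpa only [one_div_pow] using h0

lemma cast_le_half {a : ℚ} {k : ℕ} (h : a ≤ 1 / 2 ^ k) : (a : ℝ) ≤ 1 / 2 ^ k := by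
  have : (a : ℝ) ≤ ((1 / 2 ^ k : ℚ) : ℝ) := by exact_mod_cast h
  simpa using this

lemma induced_mem {f : ℝ → ℝ} {φ : List (Fin 3) → Option (ℚ × ℚ)} (hφ : IsCode φ)
    (hf : InducedBy f φ) (α : ℕ → Fin 3) {n : ℕ} {I : ℚ × ℚ} (h : φ (seg3 α n) = some I) :
    f (Phi α) ∈ Set.Icc (I.1 : ℝ) (I.2 : ℝ) := by
  have key : ∀ m, (I.1 : ℝ) - 1 / 2 ^ m ≤ (leftOf (φ (seg3 α (hIdx φ α m))) : ℝ) ∧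
      (leftOf (φ (seg3 α (hIdx φ α m))) : ℝ) ≤ I.2 := by
    intro m
    obtain ⟨p, q, hpq, hl⟩ := hIdx_good hφ α m
    have hl' := cast_le_half hl
    push_cast at hl'
    have hle : (p : ℝ) ≤ q := by exact_mod_cast hφ.1 _ _ _ hpq
    have hI : (I.1 : ℝ) ≤ I.2 := by exact_mod_cast hφ.1 _ I.1 I.2 h
    have hp : (0 : ℝ) < 1 / 2 ^ m := by positivity
    rw [hpq]
    simp only [leftOf, Option.getD_some]
    rcases le_total n (hIdx φ α m) with hc | hc
    · obtain ⟨J, hJ, h1, h2⟩ := code_mono hφ α h hc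
      rw [hpq] at hJ
      obtain rfl := Option.some.inj hJ
      have h1' : (I.1 : ℝ) ≤ p := by exact_mod_cast h1
      have h2' : (q : ℝ) ≤ I.2 := by exact_mod_cast h2
      constructor <;> linarith
    · obtain ⟨J, hJ, h1, h2⟩ := code_mono hφ α hpq hc
      rw [h] at hJ
      obtain rfl := Option.some.inj hJ
      have h1' : (p : ℝ) ≤ I.1 := by exact_mod_cast h1
      have h2' : (I.2 : ℝ) ≤ q := by exact_mod_cast h2
      constructor <;> linarith
  constructor
  · have := le_of_tendsto_of_tendsto' (half_tendsto.const_sub (I.1 : ℝ)) (hf α)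
      (fun m => (key m).1)
    simpa using this
  · exact le_of_tendsto' (hf α) (fun m => (key m).2)

lemma induced_cont {f : ℝ → ℝ} {φ : List (Fin 3) → Option (ℚ × ℚ)} (hφ : IsCode φ)
    (hf : InducedBy f φ) : ContinuousOn f (Set.Icc 0 1) := by
  have hc : Continuous (fun α => f (Phi α)) := by
    apply cont_of_cyl
    intro α k
    obtain ⟨n, p, q, hpq, hl⟩ := hφ.2.1 k α
    refine ⟨n, fun β hβ => ?_⟩
    have h1 := induced_mem hφ hf α hpq
    rw [seg3_congr hβ] at hpq
    have h2 := induced_mem hφ hf β hpq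
    have hl' := cast_le_half hl
    push_cast at hl'
    rw [abs_le]
    constructor <;> linarith [h1.1, h1.2, h2.1, h2.2]
  let P : (ℕ → Fin 3) → Set.Icc (0 : ℝ) 1 := fun α => ⟨Phi α, Phi_unit α⟩
  have hP : Continuous P := Phi_cont.subtype_mk _
  have hs : Function.Surjective P := by
    rintro ⟨x, hx⟩
    obtain ⟨α, hα⟩ := Phi_surj hx
    exact ⟨α, Subtype.ext hα⟩
  have hq : Topology.IsQuotientMap P := hP.isClosedMap.isQuotientMap hP hs
  rw [continuousOn_iff_continuous_domRestrict, hq.continuous_iff]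
  exact hc

lemma modulus_of_cont {f : ℝ → ℝ} (hf : ContinuousOn f (Set.Icc 0 1)) : HasContModulus f := by
  have hu : UniformContinuousOn f (Set.Icc 0 1) := isCompact_Icc.uniformContinuousOn_of_continuous hf
  rw [Metric.uniformContinuousOn_iff] at hu
  have : ∀ k : ℕ, ∃ m : ℕ, ∀ x ∈ Set.Icc (0 : ℝ) 1, ∀ y ∈ Set.Icc (0 : ℝ) 1,
      |x - y| ≤ 1 / 2 ^ m → |f x - f y| ≤ 1 / 2 ^ k := by
    intro k
    obtain ⟨δ, hδ, h⟩ := hu (1 / 2 ^ k) (by positivity)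
    obtain ⟨m, hm⟩ := half_pow_lt_ex hδ
    refine ⟨m, fun x hx y hy hxy => ?_⟩
    have := h x hx y hy (by rw [Real.dist_eq]; exact hxy.trans_lt hm)
    rw [Real.dist_eq] at this
    exact this.le
  choose ω hω using this
  exact ⟨fun k _ => ω k, fun k x y hx hy h => hω k _ hx.2 _ hy.2 h, fun k x _ => ⟨0, fun _ _ _ => rfl⟩⟩

lemma exists_regular (x : ℝ) : ∃ r : ℕ → ℚ, Regular r ∧ rlim r = x := by
  have : ∀ n : ℕ, ∃ q : ℚ, |x - q| < 1 / 2 ^ (n + 2) := fun n => exists_rat_near x (by positivity)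
  choose r hr using this
  refine ⟨r, ?_, ?_⟩
  · intro n
    have h1 := abs_lt.1 (hr n)
    have h2 := abs_lt.1 (hr (n + 1))
    have e1 : (1 : ℝ) / 2 ^ (n + 2) = 1 / 2 ^ (n + 1) / 2 := by rw [pow_succ _ (n + 1)]; field_simp
    have e2 : (1 : ℝ) / 2 ^ (n + 1 + 2) = 1 / 2 ^ (n + 1) / 4 := by
      rw [pow_add _ (n + 1)]; norm_num; ring
    rw [e1] at h1
    rw [e2] at h2
    have hp : (0 : ℝ) < 1 / 2 ^ (n + 1) := by positivity
    have : |(r n : ℝ) - r (n + 1)| ≤ 1 / 2 ^ (n + 1) := by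
      rw [abs_le]; constructor <;> linarith [h1.1, h1.2, h2.1, h2.2]
    have h' : ((|r n - r (n + 1)| : ℚ) : ℝ) ≤ ((1 / 2 ^ (n + 1) : ℚ) : ℝ) := by
      push_cast; exact this
    exact_mod_cast h'
  · have ht : Tendsto (fun n => (r n : ℝ)) atTop (nhds x) := by
      rw [tendsto_iff_dist_tendsto_zero]
      refine squeeze_zero (fun _ => dist_nonneg) (fun n => ?_)
        (half_tendsto.comp (tendsto_add_atTop_nat 2))
      rw [dist_comm, Real.dist_eq]
      exact (hr n).le
    exact ht.limUnder_eq

lemma cont_of_modulus {f : ℝ → ℝ} (hf : HasContModulus f) : ContinuousOn f (Set.Icc 0 1) := by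
  obtain ⟨g, hg, -⟩ := hf
  rw [Metric.continuousOn_iff]
  intro x hx ε hε
  obtain ⟨k, hk⟩ := half_pow_lt_ex hε
  obtain ⟨r, hr, rfl⟩ := exists_regular x
  refine ⟨1 / 2 ^ g k r, by positivity, fun y hy hd => ?_⟩
  obtain ⟨t, ht, rfl⟩ := exists_regular y
  rw [dist_comm, Real.dist_eq] at hd ⊢
  exact (hg k r t ⟨hr, hx⟩ ⟨ht, hy⟩ hd.le).trans_lt hk

/-- left endpoint of the code -/
noncomputable def loC (f : ℝ → ℝ) (s : List (Fin 3)) : ℚ :=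
  (⌊2 ^ s.length * sInf (f '' IR s)⌋ : ℚ) / 2 ^ s.length

/-- right endpoint of the code -/
noncomputable def hiC (f : ℝ → ℝ) (s : List (Fin 3)) : ℚ :=
  (⌈2 ^ s.length * sSup (f '' IR s)⌉ : ℚ) / 2 ^ s.length


lemma image_compact {f : ℝ → ℝ} (hf : ContinuousOn f (Set.Icc 0 1)) (s : List (Fin 3)) :
    IsCompact (f '' IR s) :=
  IsCompact.image_of_continuousOn isCompact_Icc (hf.mono (IR_unit s))

lemma image_nonempty (f : ℝ → ℝ) (s : List (Fin 3)) : (f '' IR s).Nonempty :=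
  (Set.nonempty_Icc.2 (Iseg_le s)).image f

lemma loC_le (f : ℝ → ℝ) (s : List (Fin 3)) : (loC f s : ℝ) ≤ sInf (f '' IR s) := by
  unfold loC
  push_cast
  rw [div_le_iff₀ (by positivity), mul_comm]
  exact Int.floor_le _

lemma le_loC (f : ℝ → ℝ) (s : List (Fin 3)) :
    sInf (f '' IR s) ≤ (loC f s : ℝ) + 1 / 2 ^ s.length := by
  unfold loC
  push_cast
  rw [← add_div, le_div_iff₀ (by positivity), mul_comm]
  exact (Int.lt_floor_add_one _).le

lemma le_hiC (f : ℝ → ℝ) (s : List (Fin 3)) : sSup (f '' IR s) ≤ (hiC f s : ℝ) := by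
  unfold hiC
  push_cast
  rw [le_div_iff₀ (by positivity), mul_comm]
  exact Int.le_ceil _

lemma hiC_le (f : ℝ → ℝ) (s : List (Fin 3)) :
    (hiC f s : ℝ) ≤ sSup (f '' IR s) + 1 / 2 ^ s.length := by
  unfold hiC
  push_cast
  rw [div_le_iff₀ (by positivity), add_mul, one_div, inv_mul_cancel₀ (by positivity), mul_comm]
  exact (Int.ceil_lt_add_one _).le

lemma mem_code {f : ℝ → ℝ} (hf : ContinuousOn f (Set.Icc 0 1)) (s : List (Fin 3)) {x : ℝ}
    (hx : x ∈ IR s) : (loC f s : ℝ) ≤ f x ∧ f x ≤ (hiC f s : ℝ) :=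
  ⟨(loC_le f s).trans (csInf_le (image_compact hf s).bddBelow ⟨x, hx, rfl⟩),
    (le_csSup (image_compact hf s).bddAbove ⟨x, hx, rfl⟩).trans (le_hiC f s)⟩

lemma loC_mono {f : ℝ → ℝ} (hf : ContinuousOn f (Set.Icc 0 1)) (s : List (Fin 3)) (i : Fin 3) :
    loC f s ≤ loC f (s ++ [i]) := by
  have h : sInf (f '' IR s) ≤ sInf (f '' IR (s ++ [i])) :=
    csInf_le_csInf (image_compact hf s).bddBelow (image_nonempty f _)
      (Set.image_mono (IR_nested s i))
  have h1 : 2 * ⌊2 ^ s.length * sInf (f '' IR s)⌋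
      ≤ ⌊2 ^ (s.length + 1) * sInf (f '' IR (s ++ [i]))⌋ := by
    rw [Int.le_floor]
    push_cast
    have h2 := Int.floor_le (2 ^ s.length * sInf (f '' IR s))
    have h3 := mul_le_mul_of_nonneg_left h (by positivity : (0 : ℝ) ≤ 2 ^ s.length)
    rw [pow_succ]
    linarith
  have h1' : (2 : ℚ) * ⌊2 ^ s.length * sInf (f '' IR s)⌋
      ≤ ⌊2 ^ (s.length + 1) * sInf (f '' IR (s ++ [i]))⌋ := by exact_mod_cast h1
  unfold loC
  rw [List.length_append, List.length_singleton, div_le_div_iff₀ (by positivity) (by positivity),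
    pow_succ (2 : ℚ)]
  have : (0 : ℚ) < 2 ^ s.length := by positivity
  nlinarith

lemma hiC_mono {f : ℝ → ℝ} (hf : ContinuousOn f (Set.Icc 0 1)) (s : List (Fin 3)) (i : Fin 3) :
    hiC f (s ++ [i]) ≤ hiC f s := by
  have h : sSup (f '' IR (s ++ [i])) ≤ sSup (f '' IR s) :=
    csSup_le_csSup (image_compact hf s).bddAbove (image_nonempty f _)
      (Set.image_mono (IR_nested s i))
  have h1 : ⌈2 ^ (s.length + 1) * sSup (f '' IR (s ++ [i]))⌉
      ≤ 2 * ⌈2 ^ s.length * sSup (f '' IR s)⌉ := by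
    rw [Int.ceil_le]
    push_cast
    have h2 := Int.le_ceil (2 ^ s.length * sSup (f '' IR s))
    have h3 := mul_le_mul_of_nonneg_left h (by positivity : (0 : ℝ) ≤ 2 ^ s.length)
    rw [pow_succ]
    linarith
  have h1' : (⌈2 ^ (s.length + 1) * sSup (f '' IR (s ++ [i]))⌉ : ℚ)
      ≤ 2 * ⌈2 ^ s.length * sSup (f '' IR s)⌉ := by exact_mod_cast h1
  unfold hiC
  rw [List.length_append, List.length_singleton, div_le_div_iff₀ (by positivity) (by positivity),
    pow_succ (2 : ℚ)]
  have : (0 : ℚ) < 2 ^ s.length := by positivity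
  nlinarith

lemma code_small {f : ℝ → ℝ} (hf : ContinuousOn f (Set.Icc 0 1)) (k : ℕ) :
    ∃ n : ℕ, ∀ s : List (Fin 3), s.length = n → hiC f s - loC f s ≤ 1 / 2 ^ k := by
  have hu : UniformContinuousOn f (Set.Icc 0 1) := isCompact_Icc.uniformContinuousOn_of_continuous hf
  rw [Metric.uniformContinuousOn_iff] at hu
  obtain ⟨δ, hδ, h⟩ := hu (1 / 2 ^ k / 2) (by positivity)
  obtain ⟨m, hm⟩ := half_pow_lt_ex hδ
  refine ⟨max m (k + 2), fun s hs => ?_⟩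
  have p1 : (1 : ℝ) / 2 ^ s.length ≤ 1 / 2 ^ m := by
    rw [hs]; gcongr <;> simp
  have p2 : (1 : ℝ) / 2 ^ s.length ≤ 1 / 2 ^ k / 4 := by
    have : (1 : ℝ) / 2 ^ k / 4 = 1 / 2 ^ (k + 2) := by rw [pow_add]; norm_num; ring
    rw [this, hs]; gcongr <;> simp
  obtain ⟨x, hx, hx'⟩ := (image_compact hf s).sInf_mem (image_nonempty f s)
  obtain ⟨y, hy, hy'⟩ := (image_compact hf s).sSup_mem (image_nonempty f s)
  have hd := h y (IR_unit s hy) x (IR_unit s hx)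
    (by rw [Real.dist_eq]; exact ((IR_width s hy hx).trans p1).trans_lt hm)
  rw [Real.dist_eq, hx', hy'] at hd
  have hd' := (abs_lt.1 hd).2
  have a1 := le_loC f s
  have a2 := hiC_le f s
  have : ((hiC f s - loC f s : ℚ) : ℝ) ≤ ((1 / 2 ^ k : ℚ) : ℝ) := by
    push_cast; linarith
  exact_mod_cast this

lemma code_of_cont {f : ℝ → ℝ} (hf : ContinuousOn f (Set.Icc 0 1)) :
    ∃ φ : List (Fin 3) → Option (ℚ × ℚ), IsCode φ ∧ InducedBy f φ := by
  have hcode : IsCode (fun s => some (loC f s, hiC f s)) := by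
    refine ⟨?_, ?_, ?_, ?_⟩
    · intro s p q h
      simp only [Option.some.injEq, Prod.mk.injEq] at h
      obtain ⟨rfl, rfl⟩ := h
      have := mem_code hf s (Set.left_mem_Icc.2 (Iseg_le s))
      exact_mod_cast this.1.trans this.2
    · intro k α
      obtain ⟨n, hn⟩ := code_small hf k
      exact ⟨n, _, _, rfl, hn _ (seg3_length α n)⟩
    · intro s I h i
      simp only [Option.some.injEq] at h
      subst h
      exact ⟨_, rfl, loC_mono hf s i, hiC_mono hf s i⟩
    · intro s t I J hI hJ h
      simp only [Option.some.injEq] at hI hJ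
      subst hI hJ
      have h1 : ((Iseg t).1 : ℝ) ≤ (Iseg s).2 := by exact_mod_cast h.1
      have h2 : ((Iseg s).1 : ℝ) ≤ (Iseg t).2 := by exact_mod_cast h.2
      have hs : max ((Iseg s).1 : ℝ) ((Iseg t).1 : ℝ) ∈ IR s :=
        ⟨le_max_left _ _, max_le (Iseg_le s) h1⟩
      have ht : max ((Iseg s).1 : ℝ) ((Iseg t).1 : ℝ) ∈ IR t :=
        ⟨le_max_right _ _, max_le h2 (Iseg_le t)⟩
      have a := mem_code hf s hs
      have b := mem_code hf t ht
      constructor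
      · exact_mod_cast b.1.trans a.2
      · exact_mod_cast a.1.trans b.2
  refine ⟨_, hcode, ?_⟩
  intro α
  rw [tendsto_iff_dist_tendsto_zero]
  refine squeeze_zero (fun _ => dist_nonneg) (fun n => ?_) half_tendsto
  obtain ⟨p, q, hpq, hl⟩ := hIdx_good hcode α n
  rw [hpq]
  simp only [Option.some.injEq, Prod.mk.injEq] at hpq
  obtain ⟨rfl, rfl⟩ := hpq
  have hl' := cast_le_half hl
  push_cast at hl'
  have a := mem_code hf _ (Phi_mem α (hIdx (fun s => some (loC f s, hiC f s)) α n))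
  simp only [leftOf, Option.getD_some]
  rw [Real.dist_eq, abs_le]
  constructor <;> linarith [a.1, a.2]

theorem stmt18 (f : ℝ → ℝ) :
    HasContModulus f ↔ ∃ φ : List (Fin 3) → Option (ℚ × ℚ), IsCode φ ∧ InducedBy f φ := by
  constructor
  · intro h
    exact code_of_cont (cont_of_modulus h)
  · rintro ⟨φ, hφ, hf⟩
    exact modulus_of_cont (induced_cont hφ hf)
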